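/- Proposition 3, converse direction (finite dimensions, PPT mixtures): let n ≥ 2, let M be a set of nonempty proper subsets of Fin n, and let ρ̃ = Σ_{m ∈ M} ρ̃_m, where each ρ̃_m is a positive semidefinite complex matrix with real entries on a finite nonempty type ι and Σ_{m ∈ M} tr ρ̃_m = 1. For each party s : Fin n let Ã^s : α_s → Matrix ι ι ℂ be a family of real symmetric idempotent matrices such that Ã^s(i)·Ã^{s'}(j) = Ã^{s'}(j)·Ã^s(i) whenever s ≠ s'. Assume that for each m ∈ M, all ordered products W of operators taken from parties in m and all ordered products V of operators taken from parties in the complement of m satisfy tr[ρ̃_m·W·V] = tr[ρ̃_m·Wʳ·V], where Wʳ denotes the same product taken in reversed order. Then there exist finite nonempty types ι_s, an n-partite quantum state ρ on (Π s, ι_s), a decomposition ρ = Σ_{m ∈ M} τ_m with every τ_m positive semidefinite and every τ_m^{T_m} positive semidefinite (i.e. ρ is a PPT mixture), and Hermitian idempotent matrices A^s : α_s → Matrix ι_s ι_s ℂ such that for every choice of indices (i_s)_{s}: tr[ρ·(⊗_s A^s(i_s))] = tr[ρ̃·Π_s Ã^s(i_s)]. -/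

import Mathlib

open Matrix
open scoped Kronecker ComplexOrder

/-- Partial transpose on the first tensor factor. -/
def ptA {ιA ιB : Type*} (ρ : Matrix (ιA × ιB) (ιA × ιB) ℂ) : Matrix (ιA × ιB) (ιA × ιB) ℂ :=
  fun p q => ρ (q.1, p.2) (p.1, q.2)

/-- Sum of the absolute values of the negative eigenvalues of a Hermitian matrix
(0 if the matrix is not Hermitian). -/
noncomputable def negEig {ι : Type*} [Fintype ι] [DecidableEq ι] (M : Matrix ι ι ℂ) : ℝ :=
  letI := Classical.dec M.IsHermitian
  if h : M.IsHermitian then ∑ i, max 0 (-(h.eigenvalues i)) else 0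

/-- Tensor product of one matrix per party. -/
def npTensor {n : ℕ} {ι : Fin n → Type*} (M : (s : Fin n) → Matrix (ι s) (ι s) ℂ) :
    Matrix ((s : Fin n) → ι s) ((s : Fin n) → ι s) ℂ :=
  fun i j => ∏ s, M s (i s) (j s)

/-- Partial transpose across the bipartition m: exchanges row and column index at
every coordinate s ∈ m. -/
def ptm {n : ℕ} {ι : Fin n → Type*} (m : Finset (Fin n))
    (ρ : Matrix ((s : Fin n) → ι s) ((s : Fin n) → ι s) ℂ) :
    Matrix ((s : Fin n) → ι s) ((s : Fin n) → ι s) ℂ :=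
  fun i j => ρ (fun s => if s ∈ m then j s else i s) (fun s => if s ∈ m then i s else j s)

/-- Ordered product of operators along a list of pairs (party, index). -/
noncomputable def wordProd {n : ℕ} {ι : Type*} [Fintype ι] [DecidableEq ι]
    {α : Fin n → Type*} (At : (s : Fin n) → α s → Matrix ι ι ℂ)
    (w : List (Σ s : Fin n, α s)) : Matrix ι ι ℂ :=
  (w.map (fun p => At p.1 p.2)).prod

/-!
The operators of different parties commute, so `a₁ ⊗ ⋯ ⊗ aₙ ↦ a₁ ⋯ aₙ` is a star homomorphism on
the tensor product `B` of the star algebras generated by the individual parties, and `tr[ρ̃_m ·]`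
pulls back along it to a positive functional on `B`. The trace form is nondegenerate on the star
algebra `B`, so this functional is `tr[τ_m ·]` for a unique `τ_m ∈ B`, and `τ_m ≥ 0` because the
spectral data of `τ_m` can be tested inside `B`. Since the generators are symmetric, `B` is stable
under the partial transpose `T_m`, and the PPT condition on `ρ̃_m` says exactly that the functional
is `T_m`-invariant; by uniqueness `τ_m^{T_m} = τ_m ≥ 0`.
-/

theorem exists_mem_adjoin_mul_eq_smul {K A : Type*} [Field K] [Ring A] [Algebra K A] {a : A} {c : K}
    (ha : IsIntegral K a) (hc : c ∈ spectrum K a) :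
    ∃ p ∈ Algebra.adjoin K {a}, p ≠ 0 ∧ p * a = c • p := by
  have : Nontrivial A := (subsingleton_or_nontrivial A).resolve_left fun _ => by
    simp [spectrum.of_subsingleton] at hc
  have hroot : (minpoly K a).IsRoot c := by
    simpa using spectrum.subset_polynomial_aeval a (minpoly K a) ⟨c, hc, rfl⟩
  obtain ⟨g, hg⟩ := Polynomial.dvd_iff_isRoot.2 hroot
  refine ⟨Polynomial.aeval a g, Polynomial.aeval_mem_adjoin_singleton K a, ?_, ?_⟩
  · have hg_monic : g.Monic :=
      (Polynomial.monic_X_sub_C c).of_mul_monic_left (hg ▸ minpoly.monic ha)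
    refine minpoly.aeval_ne_zero_of_dvdNotUnit_minpoly ha hg_monic
      ⟨hg_monic.ne_zero, _, Polynomial.not_isUnit_X_sub_C c, by rw [hg, mul_comm]⟩
  · have h := minpoly.aeval K a
    rw [hg, mul_comm, map_mul, map_sub, Polynomial.aeval_X, Polynomial.aeval_C, mul_sub,
      sub_eq_zero] at h
    rw [h, ← Algebra.commutes, ← Algebra.smul_def]

section TraceForm

variable {𝕜 κ : Type*} [RCLike 𝕜] [Fintype κ]

theorem eq_of_forall_mem_trace_mul_eq {S : Submodule 𝕜 (Matrix κ κ 𝕜)} (hS : ∀ x ∈ S, xᴴ ∈ S)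
    {a b : Matrix κ κ 𝕜} (ha : a ∈ S) (hb : b ∈ S)
    (h : ∀ y ∈ S, (a * y).trace = (b * y).trace) : a = b := by
  have hab := h _ (hS _ (S.sub_mem ha hb))
  rwa [← sub_eq_zero, ← trace_sub, ← sub_mul, trace_mul_conjTranspose_self_eq_zero_iff,
    sub_eq_zero] at hab

theorem exists_mem_trace_mul_eq {S : Submodule 𝕜 (Matrix κ κ 𝕜)} (hS : ∀ x ∈ S, xᴴ ∈ S)
    (φ : S →ₗ[𝕜] 𝕜) : ∃ τ ∈ S, ∀ y : S, (τ * y).trace = φ y := by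
  let traceForm : S →ₗ[𝕜] Module.Dual 𝕜 S :=
    ((LinearMap.mul 𝕜 (Matrix κ κ 𝕜)).compr₂ (traceLinearMap κ 𝕜 𝕜)).domRestrict₁₂ S S
  have hinj : Function.Injective traceForm := fun a b h =>
    Subtype.ext <| eq_of_forall_mem_trace_mul_eq hS a.2 b.2 fun y hy => DFunLike.congr_fun h ⟨y, hy⟩
  obtain ⟨τ, hτ⟩ := (LinearMap.injective_iff_surjective_of_finrank_eq_finrank
    Subspace.dual_finrank_eq.symm).1 hinj φ
  exact ⟨τ, τ.2, DFunLike.congr_fun hτ⟩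

variable [DecidableEq κ]

theorem posSemidef_of_forall_mem_trace_mul_nonneg {S : Subalgebra 𝕜 (Matrix κ κ 𝕜)}
    {τ : Matrix κ κ 𝕜} (hτS : τ ∈ S) (hτ : τ.IsHermitian)
    (hpos : ∀ y ∈ S, 0 ≤ (τ * (yᴴ * y)).trace) : τ.PosSemidef := by
  rw [hτ.posSemidef_iff_eigenvalues_nonneg]
  intro i
  -- Testing against the cofactor `p` of `X - c` in the minimal polynomial of `τ` isolates the
  -- eigenvalue `c` without leaving `S`.
  obtain ⟨p, hpS, hp, hpτ⟩ := exists_mem_adjoin_mul_eq_smul (c := (hτ.eigenvalues i : 𝕜))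
    (Algebra.IsIntegral.isIntegral τ)
    (spectrum.algebraMap_mem 𝕜 (hτ.eigenvalues_mem_spectrum_real i))
  have hp_pos : 0 < (p * pᴴ).trace :=
    (posSemidef_self_mul_conjTranspose p).trace_nonneg.lt_of_ne'
      (trace_mul_conjTranspose_self_eq_zero_iff.not.2 hp)
  have htrace : (τ * (pᴴ * p)).trace = hτ.eigenvalues i * (p * pᴴ).trace := by
    rw [← mul_assoc, trace_mul_comm, ← mul_assoc, hpτ, smul_mul, trace_smul, smul_eq_mul]
  have h := hpos p (Algebra.adjoin_le (Set.singleton_subset_iff.2 hτS) hpS)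
  rw [htrace] at h
  exact RCLike.ofReal_nonneg.1 (le_of_mul_le_mul_right (by rwa [zero_mul]) hp_pos)

theorem exists_posSemidef_mem_trace_mul_eq (S : StarSubalgebra 𝕜 (Matrix κ κ 𝕜)) (φ : S →ₗ[𝕜] 𝕜)
    (hstar : ∀ y, φ (star y) = star (φ y)) (hpos : ∀ y, 0 ≤ φ (star y * y)) :
    ∃ τ ∈ S, τ.PosSemidef ∧ ∀ y : S, (τ * y).trace = φ y := by
  have hS : ∀ x ∈ S.toSubalgebra.toSubmodule, xᴴ ∈ S.toSubalgebra.toSubmodule :=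
    fun _ => S.star_mem'
  obtain ⟨τ, hτS, hτ⟩ := exists_mem_trace_mul_eq hS φ
  have hherm : τ.IsHermitian := eq_of_forall_mem_trace_mul_eq hS (hS τ hτS) hτS fun y hy =>
    calc (τᴴ * y).trace = star (τ * yᴴ).trace := by
          rw [← trace_conjTranspose, conjTranspose_mul, conjTranspose_conjTranspose, trace_mul_comm]
      _ = star (φ (star ⟨y, hy⟩)) := congrArg star (hτ ⟨yᴴ, hS y hy⟩)
      _ = (τ * y).trace := by rw [hstar, star_star, hτ ⟨y, hy⟩]
  exact ⟨τ, hτS, posSemidef_of_forall_mem_trace_mul_nonneg hτS hherm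
    fun y hy => (hpos ⟨y, hy⟩).trans_eq (hτ _).symm, hτ⟩

end TraceForm

section TensorProduct

variable {n : ℕ} {κ : Fin n → Type*}

theorem npTensor_one [∀ s, DecidableEq (κ s)] :
    npTensor (fun s => (1 : Matrix (κ s) (κ s) ℂ)) = 1 := by
  ext i j
  simp only [npTensor, one_apply, Finset.prod_ite_zero, Finset.prod_const_one, funext_iff,
    Finset.mem_univ, true_implies]

theorem npTensor_mul_npTensor [∀ s, Fintype (κ s)] (a b : ∀ s, Matrix (κ s) (κ s) ℂ) :
    npTensor a * npTensor b = npTensor fun s => a s * b s := by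
  ext i j
  simp only [npTensor, mul_apply, ← Finset.prod_mul_distrib, Finset.prod_univ_sum,
    Fintype.piFinset_univ]

theorem conjTranspose_npTensor (a : ∀ s, Matrix (κ s) (κ s) ℂ) :
    (npTensor a)ᴴ = npTensor fun s => (a s)ᴴ := by
  ext i j
  simp [npTensor]

theorem ptm_npTensor (m : Finset (Fin n)) (a : ∀ s, Matrix (κ s) (κ s) ℂ) :
    ptm m (npTensor a) = npTensor fun s => if s ∈ m then (a s)ᵀ else a s := by
  ext i j
  simp only [ptm, npTensor]
  refine Finset.prod_congr rfl fun s _ => ?_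
  split_ifs <;> rfl

/-- The partial transpose `ptm` as a linear map. -/
def ptmLinearMap (m : Finset (Fin n)) :
    Matrix (∀ s, κ s) (∀ s, κ s) ℂ →ₗ[ℂ] Matrix (∀ s, κ s) (∀ s, κ s) ℂ where
  toFun := ptm m
  map_add' _ _ := rfl
  map_smul' _ _ := rfl

theorem trace_ptm_mul [∀ s, Fintype (κ s)] (m : Finset (Fin n))
    (a b : Matrix (∀ s, κ s) (∀ s, κ s) ℂ) : (ptm m a * b).trace = (a * ptm m b).trace := by
  let exchange : (∀ s, κ s) × (∀ s, κ s) → (∀ s, κ s) × (∀ s, κ s) := fun p =>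
    (fun s => if s ∈ m then p.2 s else p.1 s, fun s => if s ∈ m then p.1 s else p.2 s)
  have hexchange : Function.Involutive exchange := fun p => by
    ext s <;> simp only [exchange] <;> split_ifs <;> rfl
  simp only [trace, diag, mul_apply, ← Fintype.sum_prod_type']
  refine Fintype.sum_equiv hexchange.toPerm _ _ fun p => ?_
  rw [← congrArg (fun q => b q.2 q.1) (hexchange p)]
  rfl

/-- The linear extension `a₁ ⊗ ⋯ ⊗ aₙ ↦ f (a₁, …, aₙ)` of a multilinear map `f` on the matrix
algebras of the parties to the matrix algebra of the composite system. -/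
def npTensorLift [∀ s, Fintype (κ s)] [∀ s, DecidableEq (κ s)] {E : Type*} [AddCommGroup E]
    [Module ℂ E] (f : MultilinearMap ℂ (fun s => Matrix (κ s) (κ s) ℂ) E) :
    Matrix (∀ s, κ s) (∀ s, κ s) ℂ →ₗ[ℂ] E :=
  ∑ r : ∀ s, κ s × κ s,
    (entryLinearMap ℂ ℂ (fun s => (r s).1) (fun s => (r s).2)).smulRight
      (f fun s => single (r s).1 (r s).2 1)

theorem npTensorLift_npTensor [∀ s, Fintype (κ s)] [∀ s, DecidableEq (κ s)] {E : Type*}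
    [AddCommGroup E] [Module ℂ E] (f : MultilinearMap ℂ (fun s => Matrix (κ s) (κ s) ℂ) E)
    (a : ∀ s, Matrix (κ s) (κ s) ℂ) : npTensorLift f (npTensor a) = f a := by
  have hexpand : a = fun s => ∑ p : κ s × κ s, a s p.1 p.2 • single p.1 p.2 (1 : ℂ) := by
    ext1 s
    rw [Fintype.sum_prod_type]
    simpa [smul_single] using matrix_eq_sum_single (a s)
  conv_rhs => rw [hexpand, MultilinearMap.map_sum]
  simp only [npTensorLift, LinearMap.sum_apply, LinearMap.smulRight_apply, entryLinearMap_apply,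
    npTensor, MultilinearMap.map_smul_univ]

variable [∀ s, Fintype (κ s)] [∀ s, DecidableEq (κ s)]

/-- The tensor product `B₁ ⊗ ⋯ ⊗ Bₙ` of star subalgebras of the matrix algebras of the parties,
realised as the span of the product operators `npTensor a` with `a s ∈ B s`. -/
def tensorSubalgebra (B : ∀ s, StarSubalgebra ℂ (Matrix (κ s) (κ s) ℂ)) :
    StarSubalgebra ℂ (Matrix (∀ s, κ s) (∀ s, κ s) ℂ) where
  toSubalgebra := (Submodule.span ℂ (npTensor '' {a | ∀ s, a s ∈ B s})).toSubalgebra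
    (Submodule.subset_span ⟨1, fun s => one_mem (B s), npTensor_one⟩) fun x y hx hy => by
      have hxy := Submodule.mul_mem_mul hx hy
      rw [Submodule.span_mul_span] at hxy
      refine Submodule.span_mono ?_ hxy
      rintro _ ⟨_, ⟨a, ha, rfl⟩, _, ⟨b, hb, rfl⟩, rfl⟩
      exact ⟨_, fun s => mul_mem (ha s) (hb s), (npTensor_mul_npTensor a b).symm⟩
  star_mem' := fun {x} (hx : x ∈ Submodule.span ℂ _) => by
    induction hx using Submodule.span_induction with
    | mem x hx =>
      obtain ⟨a, ha, rfl⟩ := hx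
      exact Submodule.subset_span ⟨_, fun s => star_mem (ha s), (conjTranspose_npTensor a).symm⟩
    | zero => simp
    | add x y _ _ hx hy => exact star_add x y ▸ Submodule.add_mem _ hx hy
    | smul c x _ hx => exact star_smul c x ▸ Submodule.smul_mem _ _ hx

theorem mem_tensorSubalgebra {B : ∀ s, StarSubalgebra ℂ (Matrix (κ s) (κ s) ℂ)}
    {x : Matrix (∀ s, κ s) (∀ s, κ s) ℂ} :
    x ∈ tensorSubalgebra B ↔ x ∈ Submodule.span ℂ (npTensor '' {a | ∀ s, a s ∈ B s}) :=
  Iff.rfl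

theorem npTensor_mem_tensorSubalgebra {B : ∀ s, StarSubalgebra ℂ (Matrix (κ s) (κ s) ℂ)}
    {a : ∀ s, Matrix (κ s) (κ s) ℂ} (ha : ∀ s, a s ∈ B s) : npTensor a ∈ tensorSubalgebra B :=
  Submodule.subset_span ⟨a, ha, rfl⟩

theorem ptm_mem_tensorSubalgebra {B : ∀ s, StarSubalgebra ℂ (Matrix (κ s) (κ s) ℂ)}
    {m : Finset (Fin n)} (hB : ∀ s ∈ m, ∀ b ∈ B s, bᵀ ∈ B s) {x : Matrix (∀ s, κ s) (∀ s, κ s) ℂ}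
    (hx : x ∈ tensorSubalgebra B) : ptm m x ∈ tensorSubalgebra B := by
  suffices Submodule.span ℂ (npTensor '' {a | ∀ s, a s ∈ B s}) ≤
    (tensorSubalgebra B).toSubalgebra.toSubmodule.comap (ptmLinearMap m) from this hx
  rw [Submodule.span_le]
  rintro _ ⟨a, ha, rfl⟩
  change ptm m (npTensor a) ∈ tensorSubalgebra B
  rw [ptm_npTensor]
  refine npTensor_mem_tensorSubalgebra fun s => ?_
  split_ifs with hs
  exacts [hB s hs _ (ha s), ha s]

theorem ptm_eq_self_of_mem_tensorSubalgebra {B : ∀ s, StarSubalgebra ℂ (Matrix (κ s) (κ s) ℂ)}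
    {m : Finset (Fin n)} (hB : ∀ s ∈ m, ∀ b ∈ B s, bᵀ ∈ B s) {τ : Matrix (∀ s, κ s) (∀ s, κ s) ℂ}
    (hτ : τ ∈ tensorSubalgebra B)
    (htrace : ∀ a, (∀ s, a s ∈ B s) →
      (τ * npTensor fun s => if s ∈ m then (a s)ᵀ else a s).trace = (τ * npTensor a).trace) :
    ptm m τ = τ := by
  have hS : ∀ x ∈ (tensorSubalgebra B).toSubalgebra.toSubmodule,
      xᴴ ∈ (tensorSubalgebra B).toSubalgebra.toSubmodule := fun _ => (tensorSubalgebra B).star_mem'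
  let φ := traceLinearMap (∀ s, κ s) ℂ ℂ ∘ₗ LinearMap.mulLeft ℂ τ
  have hφ : Set.EqOn (φ ∘ₗ ptmLinearMap m) φ
      (Submodule.span ℂ (npTensor '' {a | ∀ s, a s ∈ B s})) := by
    refine LinearMap.eqOn_span ?_
    rintro _ ⟨a, ha, rfl⟩
    change (τ * ptm m (npTensor a)).trace = (τ * npTensor a).trace
    rw [ptm_npTensor, htrace a ha]
  exact eq_of_forall_mem_trace_mul_eq hS (ptm_mem_tensorSubalgebra hB hτ) hτ fun y hy =>
    (trace_ptm_mul m τ y).trans (hφ hy)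

end TensorProduct

section CommutingProduct

variable {n : ℕ}

theorem prod_reverse_ofFn {R : Type*} [Monoid R] {a : Fin n → R}
    (h : ∀ s t, s ≠ t → Commute (a s) (a t)) :
    (List.ofFn a).reverse.prod = (List.ofFn a).prod :=
  ((List.reverse_perm _).symm.prod_eq' (List.pairwise_ofFn.2 fun s t hst => h s t hst.ne)).symm

theorem prod_ofFn_mul {R : Type*} [Monoid R] {a b : Fin n → R}
    (h : ∀ s t, s ≠ t → Commute (a s) (b t)) :
    (List.ofFn fun s => a s * b s).prod = (List.ofFn a).prod * (List.ofFn b).prod := by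
  induction n with
  | zero => simp
  | succ n ih =>
    have hcomm : Commute (List.ofFn fun s : Fin n => a s.succ).prod (b 0) :=
      Commute.list_prod_left _ _ <| List.forall_mem_ofFn_iff.2 fun s => h _ _ s.succ_ne_zero
    simp only [List.ofFn_succ, List.prod_cons]
    rw [ih fun s t hst => h _ _ (Fin.succ_injective n |>.ne hst), mul_assoc, mul_assoc,
      hcomm.symm.left_comm]

theorem prod_ofFn_eq_mul_ite {R : Type*} [Monoid R] {a : Fin n → R}
    (h : ∀ s t, s ≠ t → Commute (a s) (a t)) (m : Finset (Fin n)) :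
    (List.ofFn a).prod = (List.ofFn fun s => if s ∈ m then a s else 1).prod *
      (List.ofFn fun s => if s ∈ m then 1 else a s).prod := by
  rw [← prod_ofFn_mul]
  · congr! 3 with s
    split_ifs <;> simp
  · intro s t hst
    split_ifs <;> simp [h s t hst]

variable {ι : Type*} [Fintype ι] [DecidableEq ι]

theorem conjTranspose_prod_ofFn {R : Type*} [Semiring R] [StarRing R] {a : Fin n → Matrix ι ι R}
    (h : ∀ s t, s ≠ t → Commute (a s) (a t)) :
    (List.ofFn a).prodᴴ = (List.ofFn fun s => (a s)ᴴ).prod := by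
  rw [← prod_reverse_ofFn h, conjTranspose_list_prod, List.map_reverse, List.reverse_reverse,
    List.map_ofFn]
  rfl

theorem transpose_prod_ofFn {R : Type*} [CommSemiring R] {a : Fin n → Matrix ι ι R}
    (h : ∀ s t, s ≠ t → Commute (a s) (a t)) :
    (List.ofFn a).prodᵀ = (List.ofFn fun s => (a s)ᵀ).prod := by
  rw [← prod_reverse_ofFn h, transpose_list_prod, List.map_reverse, List.reverse_reverse,
    List.map_ofFn]
  rfl

/-- The linear map `a₁ ⊗ ⋯ ⊗ aₙ ↦ a₁ ⋯ aₙ` from the composite system of `n` copies of `ι` to the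
matrices on `ι`. -/
def orderedProduct : Matrix (Fin n → ι) (Fin n → ι) ℂ →ₗ[ℂ] Matrix ι ι ℂ :=
  npTensorLift (MultilinearMap.mkPiAlgebraFin ℂ n (Matrix ι ι ℂ))

theorem orderedProduct_npTensor (a : Fin n → Matrix ι ι ℂ) :
    orderedProduct (npTensor a) = (List.ofFn a).prod := by
  rw [orderedProduct, npTensorLift_npTensor, MultilinearMap.mkPiAlgebraFin_apply]

variable {B : Fin n → StarSubalgebra ℂ (Matrix ι ι ℂ)}

theorem orderedProduct_mul (hB : ∀ s t, s ≠ t → ∀ a ∈ B s, ∀ b ∈ B t, Commute a b)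
    {x y : Matrix (Fin n → ι) (Fin n → ι) ℂ} (hx : x ∈ tensorSubalgebra B)
    (hy : y ∈ tensorSubalgebra B) :
    orderedProduct (x * y) = orderedProduct x * orderedProduct y := by
  rw [mem_tensorSubalgebra] at hx hy
  induction hx, hy using Submodule.span_induction₂ with
  | mem_mem x y hx hy =>
    obtain ⟨a, ha, rfl⟩ := hx
    obtain ⟨b, hb, rfl⟩ := hy
    simp only [npTensor_mul_npTensor, orderedProduct_npTensor]
    exact prod_ofFn_mul fun s t hst => hB s t hst _ (ha s) _ (hb t)
  | zero_left => simp
  | zero_right => simp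
  | add_left x y z _ _ _ hx hy => simp only [add_mul, map_add, hx, hy]
  | add_right x y z _ _ _ hy hz => simp only [mul_add, map_add, hy, hz]
  | smul_left c x y _ _ h => simp only [smul_mul_assoc, map_smul, h]
  | smul_right c x y _ _ h => simp only [mul_smul_comm, map_smul, h]

theorem orderedProduct_conjTranspose (hB : ∀ s t, s ≠ t → ∀ a ∈ B s, ∀ b ∈ B t, Commute a b)
    {x : Matrix (Fin n → ι) (Fin n → ι) ℂ} (hx : x ∈ tensorSubalgebra B) :
    orderedProduct xᴴ = (orderedProduct x)ᴴ := by
  rw [mem_tensorSubalgebra] at hx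
  induction hx using Submodule.span_induction with
  | mem x hx =>
    obtain ⟨a, ha, rfl⟩ := hx
    rw [conjTranspose_npTensor, orderedProduct_npTensor, orderedProduct_npTensor,
      conjTranspose_prod_ofFn fun s t hst => hB s t hst _ (ha s) _ (ha t)]
  | zero => simp
  | add x y _ _ hx hy => simp only [conjTranspose_add, map_add, hx, hy]
  | smul c x _ hx => simp only [conjTranspose_smul, map_smul, hx]

theorem exists_posSemidef_trace_mul_npTensor
    (hB : ∀ s t, s ≠ t → ∀ a ∈ B s, ∀ b ∈ B t, Commute a b) {ρ : Matrix ι ι ℂ}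
    (hρ : ρ.PosSemidef) :
    ∃ τ ∈ tensorSubalgebra B, τ.PosSemidef ∧ ∀ a : Fin n → Matrix ι ι ℂ, (∀ s, a s ∈ B s) →
      (τ * npTensor a).trace = (ρ * (List.ofFn a).prod).trace := by
  let φ : tensorSubalgebra B →ₗ[ℂ] ℂ := traceLinearMap ι ℂ ℂ ∘ₗ LinearMap.mulLeft ℂ ρ ∘ₗ
    orderedProduct ∘ₗ (tensorSubalgebra B).toSubalgebra.toSubmodule.subtype
  have hφ (y) : φ y = (ρ * orderedProduct (y : Matrix (Fin n → ι) (Fin n → ι) ℂ)).trace := rfl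
  have hstar (y) : φ (star y) = star (φ y) := by
    rw [hφ, hφ, StarMemClass.coe_star, star_eq_conjTranspose, orderedProduct_conjTranspose hB y.2,
      ← trace_conjTranspose, conjTranspose_mul, hρ.isHermitian.eq, trace_mul_comm]
  have hpos (y) : 0 ≤ φ (star y * y) := by
    rw [hφ, MulMemClass.coe_mul, orderedProduct_mul hB (star y).2 y.2, StarMemClass.coe_star,
      star_eq_conjTranspose, orderedProduct_conjTranspose hB y.2, ← mul_assoc, trace_mul_comm,
      ← mul_assoc]
    exact (hρ.mul_mul_conjTranspose_same _).trace_nonneg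
  obtain ⟨τ, hτB, hτ, htrace⟩ := exists_posSemidef_mem_trace_mul_eq _ φ hstar hpos
  refine ⟨τ, hτB, hτ, fun a ha => ?_⟩
  rw [htrace ⟨npTensor a, npTensor_mem_tensorSubalgebra ha⟩, hφ, orderedProduct_npTensor]

end CommutingProduct

section PartyAlgebra

variable {n : ℕ} {ι : Type*} [Fintype ι] [DecidableEq ι] {α : Fin n → Type*}
  {At : (s : Fin n) → α s → Matrix ι ι ℂ}

theorem wordProd_append (w v : List (Σ s : Fin n, α s)) :
    wordProd At (w ++ v) = wordProd At w * wordProd At v := by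
  simp [wordProd]

theorem transpose_wordProd (hsym : ∀ s i, (At s i)ᵀ = At s i) (w : List (Σ s : Fin n, α s)) :
    (wordProd At w)ᵀ = wordProd At w.reverse := by
  simp [wordProd, transpose_list_prod, Function.comp_def, hsym]

/-- The star algebra generated by the operators `At s i` of the parties `s ∈ m`. -/
def partyAlgebra (At : (s : Fin n) → α s → Matrix ι ι ℂ) (m : Set (Fin n)) :
    StarSubalgebra ℂ (Matrix ι ι ℂ) :=
  StarAlgebra.adjoin ℂ ((fun p : Σ s : Fin n, α s => At p.1 p.2) '' {p | p.1 ∈ m})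

theorem mem_partyAlgebra {m : Set (Fin n)} {s : Fin n} (hs : s ∈ m) (i : α s) :
    At s i ∈ partyAlgebra At m :=
  StarAlgebra.subset_adjoin ℂ _ ⟨⟨s, i⟩, hs, rfl⟩

theorem partyAlgebra_mono {m m' : Set (Fin n)} (h : m ⊆ m') :
    partyAlgebra At m ≤ partyAlgebra At m' :=
  StarAlgebra.adjoin_mono <| Set.image_mono fun _ hp => h hp

theorem partyAlgebra_toSubalgebra (hherm : ∀ s i, (At s i).IsHermitian) (m : Set (Fin n)) :
    (partyAlgebra At m).toSubalgebra =
      Algebra.adjoin ℂ ((fun p : Σ s : Fin n, α s => At p.1 p.2) '' {p | p.1 ∈ m}) := by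
  have hstar : star ((fun p : Σ s : Fin n, α s => At p.1 p.2) '' {p | p.1 ∈ m}) =
      (fun p : Σ s : Fin n, α s => At p.1 p.2) '' {p | p.1 ∈ m} := by
    rw [← Set.image_star, Set.image_image]
    exact Set.image_congr fun p _ => hherm p.1 p.2
  rw [partyAlgebra, StarAlgebra.adjoin_toSubalgebra, hstar, Set.union_self]

theorem partyAlgebra_toSubmodule_eq_span (hherm : ∀ s i, (At s i).IsHermitian)
    (m : Set (Fin n)) :
    (partyAlgebra At m).toSubalgebra.toSubmodule =
      Submodule.span ℂ (wordProd At '' {w | ∀ p ∈ w, p.1 ∈ m}) := by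
  rw [partyAlgebra_toSubalgebra hherm, Algebra.adjoin_eq_span]
  congr 1
  ext x
  constructor
  · intro hx
    induction hx using Submonoid.closure_induction with
    | mem x hx =>
      obtain ⟨p, hp, rfl⟩ := hx
      exact ⟨[p], by simpa using hp, by simp [wordProd]⟩
    | one => exact ⟨[], by simp, rfl⟩
    | mul x y _ _ hx hy =>
      obtain ⟨w, hw, rfl⟩ := hx
      obtain ⟨v, hv, rfl⟩ := hy
      exact ⟨w ++ v, List.forall_mem_append.2 ⟨hw, hv⟩, wordProd_append w v⟩
  · rintro ⟨w, hw, rfl⟩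
    refine list_prod_mem fun x hx => Submonoid.subset_closure ?_
    obtain ⟨p, hp, rfl⟩ := List.mem_map.1 hx
    exact ⟨p, hw p hp, rfl⟩

theorem commute_of_mem_partyAlgebra (hherm : ∀ s i, (At s i).IsHermitian)
    (hcomm : ∀ s t, s ≠ t → ∀ i j, At s i * At t j = At t j * At s i) {m m' : Set (Fin n)}
    (hm : Disjoint m m') {a b : Matrix ι ι ℂ} (ha : a ∈ partyAlgebra At m)
    (hb : b ∈ partyAlgebra At m') : Commute a b := by
  rw [← StarSubalgebra.mem_toSubalgebra, partyAlgebra_toSubalgebra hherm] at ha hb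
  refine (Algebra.commute_of_mem_adjoin_of_forall_mem_commute ha ?_).symm
  rintro _ ⟨p, hp, rfl⟩
  refine (Algebra.commute_of_mem_adjoin_of_forall_mem_commute hb ?_).symm
  rintro _ ⟨q, hq, rfl⟩
  exact hcomm _ _ (hm.ne_of_mem hp hq) _ _

theorem transpose_mem_partyAlgebra (hsym : ∀ s i, (At s i)ᵀ = At s i)
    (hherm : ∀ s i, (At s i).IsHermitian) {m : Set (Fin n)} {x : Matrix ι ι ℂ}
    (hx : x ∈ partyAlgebra At m) : xᵀ ∈ partyAlgebra At m := by
  suffices (partyAlgebra At m).toSubalgebra.toSubmodule ≤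
    (partyAlgebra At m).toSubalgebra.toSubmodule.comap (transposeLinearEquiv ι ι ℂ ℂ).toLinearMap
    from this hx
  rw [partyAlgebra_toSubmodule_eq_span hherm, Submodule.span_le]
  rintro _ ⟨w, hw, rfl⟩
  exact Submodule.subset_span
    ⟨w.reverse, fun p hp => hw p (List.mem_reverse.1 hp), (transpose_wordProd hsym w).symm⟩

theorem trace_mul_transpose_mul_of_mem_partyAlgebra (hsym : ∀ s i, (At s i)ᵀ = At s i)
    (hherm : ∀ s i, (At s i).IsHermitian) {m m' : Set (Fin n)} {ρ : Matrix ι ι ℂ}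
    (hppt : ∀ w v : List (Σ s : Fin n, α s), (∀ p ∈ w, p.1 ∈ m) → (∀ p ∈ v, p.1 ∈ m') →
      (ρ * wordProd At w * wordProd At v).trace =
        (ρ * wordProd At w.reverse * wordProd At v).trace)
    {x y : Matrix ι ι ℂ} (hx : x ∈ partyAlgebra At m) (hy : y ∈ partyAlgebra At m') :
    (ρ * xᵀ * y).trace = (ρ * x * y).trace := by
  have hx_span := (partyAlgebra_toSubmodule_eq_span hherm m).le hx
  have hy_span := (partyAlgebra_toSubmodule_eq_span hherm m').le hy
  clear hx hy
  induction hx_span, hy_span using Submodule.span_induction₂ with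
  | mem_mem x y hx hy =>
    obtain ⟨w, hw, rfl⟩ := hx
    obtain ⟨v, hv, rfl⟩ := hy
    rw [transpose_wordProd hsym, hppt w v hw hv]
  | zero_left => simp
  | zero_right => simp
  | add_left x y z _ _ _ hx hy => simp only [transpose_add, mul_add, add_mul, trace_add, hx, hy]
  | add_right x y z _ _ _ hy hz => simp only [mul_add, trace_add, hy, hz]
  | smul_left c x y _ _ h =>
    simp only [transpose_smul, mul_smul_comm, smul_mul_assoc, trace_smul, h]
  | smul_right c x y _ _ h => simp only [mul_smul_comm, trace_smul, h]

theorem trace_mul_prod_ofFn_partialTranspose (hsym : ∀ s i, (At s i)ᵀ = At s i)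
    (hherm : ∀ s i, (At s i).IsHermitian)
    (hcomm : ∀ s t, s ≠ t → ∀ i j, At s i * At t j = At t j * At s i) {m : Finset (Fin n)}
    {ρ : Matrix ι ι ℂ}
    (hppt : ∀ w v : List (Σ s : Fin n, α s), (∀ p ∈ w, p.1 ∈ m) → (∀ p ∈ v, p.1 ∉ m) →
      (ρ * wordProd At w * wordProd At v).trace =
        (ρ * wordProd At w.reverse * wordProd At v).trace)
    {a : Fin n → Matrix ι ι ℂ} (ha : ∀ s, a s ∈ partyAlgebra At {s}) :
    (ρ * (List.ofFn fun s => if s ∈ m then (a s)ᵀ else a s).prod).trace =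
      (ρ * (List.ofFn a).prod).trace := by
  have hB {x y : Fin n → Matrix ι ι ℂ} (hx : ∀ s, x s ∈ partyAlgebra At {s})
      (hy : ∀ s, y s ∈ partyAlgebra At {s}) (s t) (hst : s ≠ t) : Commute (x s) (y t) :=
    commute_of_mem_partyAlgebra hherm hcomm (Set.disjoint_singleton.2 hst) (hx s) (hy t)
  have hT (s) : (if s ∈ m then (a s)ᵀ else a s) ∈ partyAlgebra At {s} := by
    split_ifs
    exacts [transpose_mem_partyAlgebra hsym hherm (ha s), ha s]
  have hu (s) : (if s ∈ m then a s else 1) ∈ partyAlgebra At {s} := by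
    split_ifs
    exacts [ha s, one_mem _]
  let x : Matrix ι ι ℂ := (List.ofFn fun s => if s ∈ m then a s else 1).prod
  let y : Matrix ι ι ℂ := (List.ofFn fun s => if s ∈ m then 1 else a s).prod
  have hx : x ∈ partyAlgebra At m := list_prod_mem <| List.forall_mem_ofFn_iff.2 fun s => by
    split_ifs with hs
    exacts [partyAlgebra_mono (Set.singleton_subset_iff.2 hs) (ha s), one_mem _]
  have hy : y ∈ partyAlgebra At (mᶜ : Set (Fin n)) :=
    list_prod_mem <| List.forall_mem_ofFn_iff.2 fun s => by
      split_ifs with hs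
      exacts [one_mem _, partyAlgebra_mono (Set.singleton_subset_iff.2 hs) (ha s)]
  have hprod_transpose : (List.ofFn fun s => if s ∈ m then (a s)ᵀ else a s).prod = xᵀ * y := by
    rw [prod_ofFn_eq_mul_ite (hB hT hT) m, transpose_prod_ofFn (hB hu hu)]
    congr! 4 with s s
    all_goals split_ifs <;> simp
  rw [prod_ofFn_eq_mul_ite (hB ha ha) m, hprod_transpose, ← mul_assoc, ← mul_assoc]
  exact trace_mul_transpose_mul_of_mem_partyAlgebra hsym hherm hppt hx hy

theorem exists_posSemidef_ptm_eq_self_trace_mul_npTensor (hsym : ∀ s i, (At s i)ᵀ = At s i)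
    (hherm : ∀ s i, (At s i).IsHermitian)
    (hcomm : ∀ s t, s ≠ t → ∀ i j, At s i * At t j = At t j * At s i) {m : Finset (Fin n)}
    {ρ : Matrix ι ι ℂ} (hρ : ρ.PosSemidef)
    (hppt : ∀ w v : List (Σ s : Fin n, α s), (∀ p ∈ w, p.1 ∈ m) → (∀ p ∈ v, p.1 ∉ m) →
      (ρ * wordProd At w * wordProd At v).trace =
        (ρ * wordProd At w.reverse * wordProd At v).trace) :
    ∃ τ : Matrix (Fin n → ι) (Fin n → ι) ℂ, τ.PosSemidef ∧ ptm m τ = τ ∧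
      ∀ a : Fin n → Matrix ι ι ℂ, (∀ s, a s ∈ partyAlgebra At {s}) →
        (τ * npTensor a).trace = (ρ * (List.ofFn a).prod).trace := by
  obtain ⟨τ, hτ_mem, hτ, htrace⟩ := exists_posSemidef_trace_mul_npTensor
    (B := fun s => partyAlgebra At {s}) (fun s t hst a ha b hb =>
      commute_of_mem_partyAlgebra hherm hcomm (Set.disjoint_singleton.2 hst) ha hb) hρ
  have htranspose (s) (b) (hb : b ∈ partyAlgebra At {s}) : bᵀ ∈ partyAlgebra At {s} :=
    transpose_mem_partyAlgebra hsym hherm hb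
  refine ⟨τ, hτ, ptm_eq_self_of_mem_tensorSubalgebra (fun s _ => htranspose s) hτ_mem
    fun a ha => ?_, htrace⟩
  rw [htrace a ha, htrace, trace_mul_prod_ofFn_partialTranspose hsym hherm hcomm hppt ha]
  intro s
  split_ifs
  exacts [htranspose s _ (ha s), ha s]

end PartyAlgebra

section Reindexing

theorem trace_submatrix_equiv {κ κ' R : Type*} [Fintype κ] [Fintype κ'] [AddCommMonoid R]
    (a : Matrix κ κ R) (e : κ' ≃ κ) : (a.submatrix e e).trace = a.trace :=
  e.sum_comp fun k => a k k

variable {n : ℕ} {κ κ' : Fin n → Type*}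

theorem trace_submatrix_mul_npTensor_submatrix [∀ s, Fintype (κ s)] [∀ s, Fintype (κ' s)]
    (e : ∀ s, κ' s ≃ κ s) (τ : Matrix (∀ s, κ s) (∀ s, κ s) ℂ) (a : ∀ s, Matrix (κ s) (κ s) ℂ) :
    (τ.submatrix (Equiv.piCongrRight e) (Equiv.piCongrRight e) *
      npTensor fun s => (a s).submatrix (e s) (e s)).trace = (τ * npTensor a).trace := by
  have h : (npTensor fun s => (a s).submatrix (e s) (e s)) =
      (npTensor a).submatrix (Equiv.piCongrRight e) (Equiv.piCongrRight e) := rfl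
  rw [h, submatrix_mul_equiv, trace_submatrix_equiv]

theorem ptm_submatrix_piCongrRight (e : ∀ s, κ' s ≃ κ s) (m : Finset (Fin n))
    (τ : Matrix (∀ s, κ s) (∀ s, κ s) ℂ) :
    ptm m (τ.submatrix (Equiv.piCongrRight e) (Equiv.piCongrRight e)) =
      (ptm m τ).submatrix (Equiv.piCongrRight e) (Equiv.piCongrRight e) := by
  ext i j
  simp only [ptm, submatrix_apply]
  congr <;> ext s <;> simp only [Equiv.piCongrRight_apply, Pi.map_apply] <;> split_ifs <;> rfl

end Reindexing

theorem isHermitian_of_transpose_eq_of_im_eq_zero {κ : Type*} {a : Matrix κ κ ℂ} (hsym : aᵀ = a)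
    (hreal : ∀ p q, (a p q).im = 0) : a.IsHermitian := by
  rw [IsHermitian, conjTranspose, hsym]
  ext p q
  exact Complex.conj_eq_iff_im.2 (hreal p q)

theorem commutative_PPT_mixture_gives_tensorProduct_PPT_mixture_general
    {n : ℕ} {ι : Type*} [Fintype ι] [Nonempty ι] [DecidableEq ι] {α : Fin n → Type*}
    (M : Finset (Finset (Fin n))) (ρm : Finset (Fin n) → Matrix ι ι ℂ)
    (hρm : ∀ m ∈ M, (ρm m).PosSemidef) (htr : ∑ m ∈ M, (ρm m).trace = 1)
    (At : (s : Fin n) → α s → Matrix ι ι ℂ) (hsym : ∀ s i, (At s i)ᵀ = At s i)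
    (hreal : ∀ s i p q, ((At s i) p q).im = 0)
    (hcomm : ∀ s t, s ≠ t → ∀ i j, At s i * At t j = At t j * At s i)
    (hppt : ∀ m ∈ M, ∀ w v : List (Σ s : Fin n, α s),
      (∀ p ∈ w, p.1 ∈ m) → (∀ p ∈ v, p.1 ∉ m) →
      (ρm m * wordProd At w * wordProd At v).trace =
        (ρm m * wordProd At w.reverse * wordProd At v).trace) :
    ∃ (d : Fin n → ℕ), (∀ s, 0 < d s) ∧
    ∃ (ρ : Matrix ((s : Fin n) → Fin (d s)) ((s : Fin n) → Fin (d s)) ℂ)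
      (τ : Finset (Fin n) → Matrix ((s : Fin n) → Fin (d s)) ((s : Fin n) → Fin (d s)) ℂ)
      (A : (s : Fin n) → α s → Matrix (Fin (d s)) (Fin (d s)) ℂ),
      ρ.PosSemidef ∧ ρ.trace = 1 ∧ ρ = ∑ m ∈ M, τ m ∧
      (∀ m ∈ M, (τ m).PosSemidef ∧ ptm m (τ m) = τ m) ∧
      (∀ s i, (A s i).IsHermitian ∧ (IsIdempotentElem (At s i) → IsIdempotentElem (A s i))) ∧
      ∀ i : (s : Fin n) → α s, (ρ * npTensor fun s => A s (i s)).trace =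
        ((∑ m ∈ M, ρm m) * (List.ofFn fun s => At s (i s)).prod).trace := by
  have hherm s i := isHermitian_of_transpose_eq_of_im_eq_zero (hsym s i) (hreal s i)
  choose! τ hτ hτ_ptm hτ_trace using fun m (hm : m ∈ M) =>
    exists_posSemidef_ptm_eq_self_trace_mul_npTensor hsym hherm hcomm (hρm m hm) (hppt m hm)
  let e (_ : Fin n) : Fin (Fintype.card ι) ≃ ι := (Fintype.equivFin ι).symm
  let E := Equiv.piCongrRight e
  have htrace (a : Fin n → Matrix ι ι ℂ) (ha : ∀ s, a s ∈ partyAlgebra At {s}) :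
      ((∑ m ∈ M, (τ m).submatrix E E) * npTensor fun s => (a s).submatrix (e s) (e s)).trace =
        ((∑ m ∈ M, ρm m) * (List.ofFn a).prod).trace := by
    simp only [Finset.sum_mul, trace_sum]
    refine Finset.sum_congr rfl fun m hm => ?_
    rw [trace_submatrix_mul_npTensor_submatrix, hτ_trace m hm a ha]
  refine ⟨fun _ => Fintype.card ι, fun _ => Fintype.card_pos, ∑ m ∈ M, (τ m).submatrix E E,
    fun m => (τ m).submatrix E E, fun s i => (At s i).submatrix (e s) (e s), ?_, ?_, rfl, ?_, ?_,
    ?_⟩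
  · exact posSemidef_sum M fun m hm => (hτ m hm).submatrix E
  · simpa [npTensor_one, htr, trace_sum] using htrace (fun _ => 1) fun _ => one_mem _
  · exact fun m hm => ⟨(hτ m hm).submatrix E, by rw [ptm_submatrix_piCongrRight, hτ_ptm m hm]⟩
  · refine fun s i => ⟨(hherm s i).submatrix _, fun h => ?_⟩
    rw [IsIdempotentElem, submatrix_mul_equiv, h.eq]
  · exact fun i => htrace (fun s => At s (i s)) fun s =>
      mem_partyAlgebra (Set.mem_singleton s) (i s)

/-- Proposition 3, converse direction, finite dimensions: a commutative
PPT mixture quantum representation in finite dimensions yields a tensor-product PPT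
mixture quantum representation reproducing the same expectation values. -/
theorem commutative_PPT_mixture_gives_tensorProduct_PPT_mixture
    {n : ℕ} (hn : 2 ≤ n) {ι : Type*} [Fintype ι] [Nonempty ι] [DecidableEq ι]
    {α : Fin n → Type*}
    (M : Finset (Finset (Fin n))) (hM : ∀ m ∈ M, m.Nonempty ∧ m ≠ Finset.univ)
    (ρm : Finset (Fin n) → Matrix ι ι ℂ)
    (hρm : ∀ m ∈ M, (ρm m).PosSemidef)
    (hρreal : ∀ m ∈ M, ∀ p q, ((ρm m) p q).im = 0)
    (htr : ∑ m ∈ M, Matrix.trace (ρm m) = 1)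
    (At : (s : Fin n) → α s → Matrix ι ι ℂ)
    (hsym : ∀ s i, (At s i)ᵀ = At s i)
    (hreal : ∀ s i p q, ((At s i) p q).im = 0)
    (hidem : ∀ s i, At s i * At s i = At s i)
    (hcomm : ∀ s s', s ≠ s' → ∀ i j, At s i * At s' j = At s' j * At s i)
    (hppt : ∀ m ∈ M, ∀ (w v : List (Σ s : Fin n, α s)),
      (∀ p ∈ w, p.1 ∈ m) → (∀ p ∈ v, p.1 ∉ m) →
      Matrix.trace (ρm m * wordProd At w * wordProd At v) =
        Matrix.trace (ρm m * wordProd At w.reverse * wordProd At v)) :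
    ∃ (d : Fin n → ℕ), (∀ s, 0 < d s) ∧
    ∃ (ρ : Matrix ((s : Fin n) → Fin (d s)) ((s : Fin n) → Fin (d s)) ℂ)
      (τ : Finset (Fin n) → Matrix ((s : Fin n) → Fin (d s)) ((s : Fin n) → Fin (d s)) ℂ)
      (A : (s : Fin n) → α s → Matrix (Fin (d s)) (Fin (d s)) ℂ),
      ρ.PosSemidef ∧ Matrix.trace ρ = 1 ∧
      ρ = ∑ m ∈ M, τ m ∧
      (∀ m ∈ M, (τ m).PosSemidef ∧ (ptm m (τ m)).PosSemidef) ∧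
      (∀ s i, (A s i).IsHermitian ∧ A s i * A s i = A s i) ∧
      (∀ i : (s : Fin n) → α s,
        Matrix.trace (ρ * npTensor (fun s => A s (i s))) =
          Matrix.trace ((∑ m ∈ M, ρm m) * (List.ofFn (fun s => At s (i s))).prod)) := by
  obtain ⟨d, hd, ρ, τ, A, hρ, hρtr, hρτ, hτ, hA, hexp⟩ :=
    commutative_PPT_mixture_gives_tensorProduct_PPT_mixture_general M ρm hρm htr At hsym hreal
      hcomm hppt
  exact ⟨d, hd, ρ, τ, A, hρ, hρtr, hρτ, fun m hm => ⟨(hτ m hm).1, (hτ m hm).2.symm ▸ (hτ m hm).1⟩,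
    fun s i => ⟨(hA s i).1, (hA s i).2 (hidem s i)⟩, hexp⟩
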